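/- For the family 𝔤₁₂(z₃, w₁, w₂, θ₁, θ₂) with w₁ ≠ 0, the structure J is integrable, i.e. the Nijenhuis tensor N(E,F) = 0 for all E, F ∈ 𝔤, if and only if z₃ = −w₁. -/

import Mathlib

/-!
For any bilinear bracket and any `J` with `J² = -1`, the Nijenhuis tensor is conjugate-linear in
each argument: `N(Jx, y) = -J N(x, y) = N(x, Jy)`. When the bracket is alternating, so is `N`, and
on the four-dimensional space spanned by `X`, `JX`, `Z`, `JZ` the tensor is therefore governed by
the single value `N(X, Z)`. For `𝔤₁₂` this value is `(w₁ + z₃) • ((w₂ / w₁) Z - W)`, whose second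
factor never vanishes.
-/

noncomputable section

/-- The bilinear antisymmetric bracket on ℝ⁴ determined by the structure constants. -/
def bk (z₃ w₁ w₂ θ₁ θ₂ : ℝ) (E F : Fin 4 → ℝ) : Fin 4 → ℝ :=
  (E 0 * F 1 - E 1 * F 0) • (![0, 0, -θ₁, -θ₂] : Fin 4 → ℝ) +
  (E 0 * F 2 - E 2 * F 0) • (![0, 0, 0, -w₁] : Fin 4 → ℝ) +
  (E 0 * F 3 - E 3 * F 0) • (![0, 0, -z₃, 0] : Fin 4 → ℝ) +
  (E 1 * F 2 - E 2 * F 1) • (![0, 0, 0, -w₂] : Fin 4 → ℝ) +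
  (E 1 * F 3 - E 3 * F 1) • (![0, 0, -(z₃ * w₂ / w₁), 0] : Fin 4 → ℝ) +
  (E 2 * F 3 - E 3 * F 2) • (![0, 0, 0, 0] : Fin 4 → ℝ)

/-- The almost Hermitian structure J with J(X)=Y, J(Y)=-X, J(Z)=W, J(W)=-Z. -/
def Jm (E : Fin 4 → ℝ) : Fin 4 → ℝ := ![-E 1, E 0, -E 3, E 2]

/-- The Nijenhuis tensor of J. -/
def NT (z₃ w₁ w₂ θ₁ θ₂ : ℝ) (E F : Fin 4 → ℝ) : Fin 4 → ℝ :=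
  bk z₃ w₁ w₂ θ₁ θ₂ E F + Jm (bk z₃ w₁ w₂ θ₁ θ₂ (Jm E) F) + Jm (bk z₃ w₁ w₂ θ₁ θ₂ E (Jm F)) -
    bk z₃ w₁ w₂ θ₁ θ₂ (Jm E) (Jm F)

section Nijenhuis

variable {R M : Type*} [CommRing R] [AddCommGroup M] [Module R M]

/-- The Nijenhuis tensor of an endomorphism `J` with respect to a bracket `B`, as a bilinear map.
For a general `J` the first term is `-J² [x, y]`; it is written here in the form it takes when
`J² = -1`. -/
def nijenhuis (B : M →ₗ[R] M →ₗ[R] M) (J : M →ₗ[R] M) : M →ₗ[R] M →ₗ[R] M :=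
  B + (B ∘ₗ J).compr₂ J + (B.compl₂ J).compr₂ J - B.compl₁₂ J J

variable (B : M →ₗ[R] M →ₗ[R] M) (J : M →ₗ[R] M)

theorem nijenhuis_apply (x y : M) :
    nijenhuis B J x y = B x y + J (B (J x) y) + J (B x (J y)) - B (J x) (J y) := rfl

variable {B J}

theorem nijenhuis_map_left (hJ : ∀ x, J (J x) = -x) (x y : M) :
    nijenhuis B J (J x) y = -J (nijenhuis B J x y) := by
  simp only [nijenhuis_apply, hJ, map_add, map_sub, map_neg, LinearMap.neg_apply]
  abel

theorem nijenhuis_map_right (hJ : ∀ x, J (J x) = -x) (x y : M) :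
    nijenhuis B J x (J y) = -J (nijenhuis B J x y) := by
  simp only [nijenhuis_apply, hJ, map_add, map_sub, map_neg]
  abel

theorem isAlt_nijenhuis (hB : B.IsAlt) : (nijenhuis B J).IsAlt := fun x ↦ by
  have hJx : J (B (J x) x) + J (B x (J x)) = 0 := by
    rw [← hB.neg x (J x), map_neg, neg_add_cancel]
  rw [nijenhuis_apply, hB, hB, zero_add, hJx, sub_zero]

theorem nijenhuis_eq_zero_of_span_eq_top (hJ : ∀ x, J (J x) = -x) {s : Set M}
    (hs : Submodule.span R (s ∪ J '' s) = ⊤)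
    (h : ∀ x ∈ s, ∀ y ∈ s, nijenhuis B J x y = 0) : nijenhuis B J = 0 := by
  have h_right : ∀ x ∈ s, nijenhuis B J x = 0 := fun x hx ↦ by
    refine LinearMap.ext_on hs ?_
    rintro _ (hy | ⟨y, hy, rfl⟩)
    · exact h x hx _ hy
    · simp [nijenhuis_map_right hJ, h x hx y hy]
  refine LinearMap.ext_on hs ?_
  rintro _ (hx | ⟨x, hx, rfl⟩)
  · exact h_right _ hx
  · ext y
    simp [nijenhuis_map_left hJ, h_right x hx]

theorem nijenhuis_eq_zero_iff_of_span_pair_eq_top (hB : B.IsAlt) (hJ : ∀ x, J (J x) = -x) {x z : M}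
    (hs : Submodule.span R ({x, z} ∪ J '' {x, z}) = ⊤) :
    nijenhuis B J = 0 ↔ nijenhuis B J x z = 0 := by
  refine ⟨fun h ↦ by simp [h], fun hxz ↦ nijenhuis_eq_zero_of_span_eq_top hJ hs ?_⟩
  have hN : (nijenhuis B J).IsAlt := isAlt_nijenhuis hB
  have hzx : nijenhuis B J z x = 0 := by rw [← hN.neg, hxz, neg_zero]
  rintro _ (rfl | rfl) _ (rfl | rfl)
  exacts [hN _, hxz, hzx, hN _]

end Nijenhuis

/-- The bracket `bk` of `𝔤₁₂`, bundled as a bilinear map. -/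
def bkBilin (z₃ w₁ w₂ θ₁ θ₂ : ℝ) : (Fin 4 → ℝ) →ₗ[ℝ] (Fin 4 → ℝ) →ₗ[ℝ] (Fin 4 → ℝ) :=
  LinearMap.mk₂ ℝ (bk z₃ w₁ w₂ θ₁ θ₂)
    (fun E E' F ↦ by simp only [bk, Pi.add_apply]; module)
    (fun c E F ↦ by simp only [bk, Pi.smul_apply, smul_eq_mul]; module)
    (fun E F F' ↦ by simp only [bk, Pi.add_apply]; module)
    (fun c E F ↦ by simp only [bk, Pi.smul_apply, smul_eq_mul]; module)

/-- The almost complex structure `Jm`, bundled as a linear map. -/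
def jmLin : (Fin 4 → ℝ) →ₗ[ℝ] (Fin 4 → ℝ) where
  toFun := Jm
  map_add' E F := by simp [Jm, add_comm]
  map_smul' c E := by simp [Jm]

theorem jmLin_apply (E : Fin 4 → ℝ) : jmLin E = Jm E := rfl

theorem jmLin_apply_apply (E : Fin 4 → ℝ) : jmLin (jmLin E) = -E := by
  ext i
  fin_cases i <;> rfl

theorem isAlt_bkBilin (z₃ w₁ w₂ θ₁ θ₂ : ℝ) : (bkBilin z₃ w₁ w₂ θ₁ θ₂).IsAlt := fun E ↦ by
  simp [bkBilin, bk, mul_comm]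

theorem nijenhuis_bkBilin_apply (z₃ w₁ w₂ θ₁ θ₂ : ℝ) (E F : Fin 4 → ℝ) :
    nijenhuis (bkBilin z₃ w₁ w₂ θ₁ θ₂) jmLin E F = NT z₃ w₁ w₂ θ₁ θ₂ E F := rfl

theorem span_union_image_jmLin_eq_top :
    Submodule.span ℝ ({![1, 0, 0, 0], ![0, 0, 1, 0]} ∪ jmLin '' {![1, 0, 0, 0], ![0, 0, 1, 0]}) =
      ⊤ := by
  refine Submodule.eq_top_iff'.2 fun E ↦ ?_
  have hE : E = E 0 • ![1, 0, 0, 0] + E 2 • ![0, 0, 1, 0] +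
      E 1 • jmLin ![1, 0, 0, 0] + E 3 • jmLin ![0, 0, 1, 0] := by
    ext i
    fin_cases i <;> simp [jmLin_apply, Jm]
  rw [hE]
  refine add_mem (add_mem (add_mem ?_ ?_) ?_) ?_ <;>
    exact Submodule.smul_mem _ _ (Submodule.subset_span (by simp))

theorem forall_nt_eq_zero_iff (z₃ w₁ w₂ θ₁ θ₂ : ℝ) :
    (∀ E F, NT z₃ w₁ w₂ θ₁ θ₂ E F = 0) ↔
      NT z₃ w₁ w₂ θ₁ θ₂ ![1, 0, 0, 0] ![0, 0, 1, 0] = 0 := by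
  simp only [← nijenhuis_bkBilin_apply]
  rw [← nijenhuis_eq_zero_iff_of_span_pair_eq_top (isAlt_bkBilin z₃ w₁ w₂ θ₁ θ₂)
    jmLin_apply_apply span_union_image_jmLin_eq_top, LinearMap.ext_iff₂]
  rfl

theorem nt_apply_X_Z {w₁ : ℝ} (hw : w₁ ≠ 0) (z₃ w₂ θ₁ θ₂ : ℝ) :
    NT z₃ w₁ w₂ θ₁ θ₂ ![1, 0, 0, 0] ![0, 0, 1, 0] = (w₁ + z₃) • ![0, 0, w₂ / w₁, -1] := by
  have hcoeff : w₂ + z₃ * w₂ / w₁ = (w₁ + z₃) * (w₂ / w₁) := by field_simp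
  calc
    NT z₃ w₁ w₂ θ₁ θ₂ ![1, 0, 0, 0] ![0, 0, 1, 0]
      = ![0, 0, w₂ + z₃ * w₂ / w₁, -w₁ + -z₃] := by
        ext i
        fin_cases i <;> simp [NT, bk, Jm]
    _ = (w₁ + z₃) • ![0, 0, w₂ / w₁, -1] := by
        simp [hcoeff, add_comm]

theorem g12_integrable_iff (z₃ w₁ w₂ θ₁ θ₂ : ℝ) (hw : w₁ ≠ 0) :
    (∀ E F : Fin 4 → ℝ, NT z₃ w₁ w₂ θ₁ θ₂ E F = 0) ↔ z₃ = -w₁ := by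
  have hv : (![0, 0, w₂ / w₁, -1] : Fin 4 → ℝ) ≠ 0 := fun h ↦ by simpa using congrFun h 3
  rw [forall_nt_eq_zero_iff, nt_apply_X_Z hw, smul_eq_zero_iff_left hv, add_comm,
    add_eq_zero_iff_eq_neg]

end
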